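/- arXiv:1506.06002 — 2 statements merged into one kernel-verified Lean document; each statement's English description precedes it below -/
import Mathlib

section
/- Every element of the sister group Γ_s^(11) can be written as ε·W, where ε ∈ {1,−1} and W is a finite product of the matrices I₀ = [[0,0,i/√11],[0,1,0],[i√11,0,0]], R₁ = [[1,0,0],[0,−1,0],[0,0,1]], R₂ = [[1,1,iω₁₁/√11],[0,−1,1],[0,0,1]], R₃ = [[1,ω̄₁₁,−3/2+i/(2√11)],[0,−1,ω₁₁],[0,0,1]], T = [[1,0,i/√11],[0,1,0],[0,0,1]] and their inverses, where ω₁₁ = (1+i√11)/2. In other words, Γ_s^(11) is generated, modulo scalar matrices ±I, by I₀, R₁, R₂, R₃, T. -/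
noncomputable section

open Matrix

/-- The Hermitian form matrix `J`. -/
def matJ : Matrix (Fin 3) (Fin 3) ℂ := !![0,0,1; 0,1,0; 1,0,0]

/-- Membership in `U(2,1;J)`. -/
def inU21 (M : Matrix (Fin 3) (Fin 3) ℂ) : Prop := IsUnit M ∧ Mᴴ * matJ * M = matJ

/-- `i√11`. -/
def isq11 : ℂ := Complex.I * (Real.sqrt 11 : ℂ)

/-- `ω₁₁ = (1 + i√11)/2`. -/
def ω₁₁ : ℂ := (1 + Complex.I * (Real.sqrt 11 : ℂ)) / 2

/-- Membership in the ring of integers `O₁₁ = ℤ + ℤ·ω₁₁`. -/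
def inO11 (z : ℂ) : Prop := ∃ a b : ℤ, z = (a : ℂ) + (b : ℂ) * ω₁₁

/-- The sister group `Γ_s^(11)`. -/
def GammaS11 (M : Matrix (Fin 3) (Fin 3) ℂ) : Prop :=
  inU21 M ∧ inO11 (M 0 0) ∧ inO11 (M 0 1) ∧ inO11 (M 1 1) ∧ inO11 (M 1 2) ∧
    inO11 (M 2 2) ∧ inO11 (isq11 * M 0 2) ∧ inO11 (M 1 0 / isq11) ∧
    inO11 (M 2 0 / isq11) ∧ inO11 (M 2 1 / isq11)

def I₀ : Matrix (Fin 3) (Fin 3) ℂ :=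
  !![0, 0, Complex.I / (Real.sqrt 11 : ℂ); 0, 1, 0; Complex.I * (Real.sqrt 11 : ℂ), 0, 0]

def R₁ : Matrix (Fin 3) (Fin 3) ℂ := !![1,0,0; 0,-1,0; 0,0,1]

def R₂ : Matrix (Fin 3) (Fin 3) ℂ :=
  !![1, 1, Complex.I * ω₁₁ / (Real.sqrt 11 : ℂ); 0, -1, 1; 0, 0, 1]

def R₃ : Matrix (Fin 3) (Fin 3) ℂ :=
  !![1, (starRingEnd ℂ) ω₁₁, -3/2 + Complex.I / (2 * (Real.sqrt 11 : ℂ));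
     0, -1, ω₁₁; 0, 0, 1]

def T : Matrix (Fin 3) (Fin 3) ℂ :=
  !![1, 0, Complex.I / (Real.sqrt 11 : ℂ); 0, 1, 0; 0, 0, 1]

namespace GS

lemma d_sq : isq11 * isq11 = -11 := by
  have h : ((Real.sqrt 11 : ℝ) : ℂ) * ((Real.sqrt 11 : ℝ) : ℂ) = 11 := by
    rw [← Complex.ofReal_mul, Real.mul_self_sqrt (by norm_num)]; norm_num
  unfold isq11
  linear_combination (Complex.I * Complex.I) * h + 11 * Complex.I_mul_I

lemma d_ne : isq11 ≠ 0 := by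
  intro h
  have := d_sq
  rw [h] at this
  norm_num at this

lemma d_conj : (starRingEnd ℂ) isq11 = -isq11 := by
  simp [isq11]

lemma om_eq : ω₁₁ = (1 + isq11) / 2 := rfl

lemma om_sq : ω₁₁ * ω₁₁ = ω₁₁ - 3 := by
  rw [om_eq]; linear_combination d_sq / 4

lemma I_div : Complex.I / (Real.sqrt 11 : ℂ) = isq11 / 11 := by
  have h : ((Real.sqrt 11 : ℝ) : ℂ) * ((Real.sqrt 11 : ℝ) : ℂ) = 11 := by
    rw [← Complex.ofReal_mul, Real.mul_self_sqrt (by norm_num)]; norm_num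
  have h0 : ((Real.sqrt 11 : ℝ) : ℂ) ≠ 0 := by
    intro h1; rw [h1] at h; norm_num at h
  rw [div_eq_iff h0]; unfold isq11
  linear_combination -(Complex.I / 11) * h

lemma I0_eq : I₀ = !![0, 0, isq11 / 11; 0, 1, 0; isq11, 0, 0] := by
  rw [I₀, I_div]; rfl

lemma T_eq : T = !![1, 0, isq11 / 11; 0, 1, 0; 0, 0, 1] := by
  rw [T, I_div]

lemma R2_eq : R₂ = !![1, 1, isq11 / 11 * ω₁₁; 0, -1, 1; 0, 0, 1] := by
  rw [R₂, mul_div_right_comm, I_div]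

lemma R3_eq : R₃ = !![1, (1 - isq11) / 2, -3/2 + isq11 / 22; 0, -1, ω₁₁; 0, 0, 1] := by
  have h : Complex.I / (2 * (Real.sqrt 11 : ℂ)) = isq11 / 22 := by
    rw [mul_comm, ← div_div, I_div]; ring
  rw [R₃, h, om_eq]
  simp [d_conj, map_ofNat, sub_eq_add_neg]

/-- The inverse of `T`. -/
def Tinv : Matrix (Fin 3) (Fin 3) ℂ := !![1, 0, -(isq11 / 11); 0, 1, 0; 0, 0, 1]

lemma Tinv_mul : Tinv * T = 1 := by
  rw [T_eq, Tinv]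
  ext i j; fin_cases i <;> fin_cases j <;> simp [Matrix.mul_apply, Fin.sum_univ_three]

lemma T_inv : T⁻¹ = Tinv := Matrix.inv_eq_left_inv Tinv_mul

/-! Integers. -/

lemma O_int (a : ℤ) : inO11 (a : ℂ) := ⟨a, 0, by simp⟩
lemma O_zero : inO11 0 := ⟨0, 0, by simp⟩
lemma O_one : inO11 1 := ⟨1, 0, by simp⟩
lemma O_om : inO11 ω₁₁ := ⟨0, 1, by simp⟩
lemma O_d : inO11 isq11 := ⟨-1, 2, by rw [om_eq]; push_cast; ring⟩

lemma O_add {x y : ℂ} (hx : inO11 x) (hy : inO11 y) : inO11 (x + y) := by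
  obtain ⟨a, b, rfl⟩ := hx
  obtain ⟨c, e, rfl⟩ := hy
  exact ⟨a + c, b + e, by push_cast; ring⟩

lemma O_neg {x : ℂ} (hx : inO11 x) : inO11 (-x) := by
  obtain ⟨a, b, rfl⟩ := hx
  exact ⟨-a, -b, by push_cast; ring⟩

lemma O_mul {x y : ℂ} (hx : inO11 x) (hy : inO11 y) : inO11 (x * y) := by
  obtain ⟨a, b, rfl⟩ := hx
  obtain ⟨c, e, rfl⟩ := hy
  exact ⟨a * c - 3 * b * e, a * e + b * c + b * e, by
    push_cast; linear_combination (b * e : ℂ) * om_sq⟩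

lemma d_re : isq11.re = 0 := by simp [isq11]
lemma d_im : isq11.im = Real.sqrt 11 := by simp [isq11]
lemma q_sq : Real.sqrt 11 * Real.sqrt 11 = 11 := Real.mul_self_sqrt (by norm_num)
lemma q_pos : 0 < Real.sqrt 11 := Real.sqrt_pos.2 (by norm_num)

lemma om_re : ω₁₁.re = 1 / 2 := by simp [ω₁₁]
lemma om_im : ω₁₁.im = Real.sqrt 11 / 2 := by simp [ω₁₁]

lemma normSq_O (a b : ℤ) : Complex.normSq ((a : ℂ) + b * ω₁₁) = ((a * a + a * b + 3 * b * b : ℤ) : ℝ) := by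
  rw [Complex.normSq_apply]
  simp only [Complex.add_re, Complex.add_im, Complex.mul_re, Complex.mul_im, Complex.intCast_re,
    Complex.intCast_im, om_re, om_im]
  push_cast
  linear_combination (b * b / 4 : ℝ) * q_sq

lemma O_normSq {x : ℂ} (hx : inO11 x) : ∃ n : ℤ, Complex.normSq x = n := by
  obtain ⟨a, b, rfl⟩ := hx
  exact ⟨_, normSq_O a b⟩

lemma O_unit {x : ℂ} (hx : inO11 x) (h : Complex.normSq x = 1) : x = 1 ∨ x = -1 := by
  obtain ⟨a, b, rfl⟩ := hx
  rw [normSq_O] at h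
  have h : a * a + a * b + 3 * b * b = 1 := by exact_mod_cast h
  have hb : b = 0 := by
    have h1 : b * b < 1 := by nlinarith [sq_nonneg (2 * a + b)]
    have : b < 1 := by nlinarith
    have : -1 < b := by nlinarith
    omega
  subst hb
  have : (a - 1) * (a + 1) = 0 := by linarith
  rcases mul_eq_zero.1 this with h | h
  · left; rw [show a = 1 by omega]; simp
  · right; rw [show a = -1 by omega]; simp

lemma O_real {x : ℂ} (hx : inO11 x) (h : x.im = 0) : ∃ n : ℤ, x = n := by
  obtain ⟨a, b, rfl⟩ := hx
  simp only [Complex.add_im, Complex.mul_im, Complex.intCast_re,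
    Complex.intCast_im, om_im] at h
  have : (b : ℝ) = 0 := by
    have := q_pos
    have h2 : (b : ℝ) * Real.sqrt 11 = 0 := by linarith
    rcases mul_eq_zero.1 h2 with h | h
    · exact h
    · linarith
  have hb : b = 0 := by exact_mod_cast this
  exact ⟨a, by simp [hb]⟩

/-! The group. -/

lemma inU21_of {M : Matrix (Fin 3) (Fin 3) ℂ} (h : Mᴴ * matJ * M = matJ) : inU21 M := by
  refine ⟨?_, h⟩
  rw [Matrix.isUnit_iff_isUnit_det, isUnit_iff_ne_zero]
  intro h0
  have := congrArg Matrix.det h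
  rw [Matrix.det_mul, h0, mul_zero] at this
  simp [matJ, Matrix.det_fin_three] at this

lemma Gamma_mul {A B : Matrix (Fin 3) (Fin 3) ℂ} (hA : GammaS11 A) (hB : GammaS11 B) :
    GammaS11 (A * B) := by
  obtain ⟨⟨_, uA⟩, a00, a01, a11, a12, a22, a02, a10, a20, a21⟩ := hA
  obtain ⟨⟨_, uB⟩, b00, b01, b11, b12, b22, b02, b10, b20, b21⟩ := hB
  have hd := d_ne
  refine ⟨inU21_of ?_, ?_⟩
  · rw [Matrix.conjTranspose_mul]
    calc Bᴴ * Aᴴ * matJ * (A * B) = Bᴴ * (Aᴴ * matJ * A) * B := by simp only [Matrix.mul_assoc]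
      _ = matJ := by rw [uA, uB]
  simp only [Matrix.mul_apply, Fin.sum_univ_three]
  refine ⟨?_, ?_, ?_, ?_, ?_, ?_, ?_, ?_, ?_⟩
  · convert O_add (O_add (O_mul a00 b00) (O_mul (O_mul a01 b10) O_d)) (O_mul a02 b20) using 1
    field_simp
  · convert O_add (O_add (O_mul a00 b01) (O_mul a01 b11)) (O_mul a02 b21) using 1
    field_simp
  · convert O_add (O_add (O_mul (O_mul a10 O_d) b01) (O_mul a11 b11)) (O_mul (O_mul a12 b21) O_d) using 1
    field_simp
  · convert O_add (O_add (O_mul a10 b02) (O_mul a11 b12)) (O_mul a12 b22) using 1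
    field_simp
  · convert O_add (O_add (O_mul a20 b02) (O_mul (O_mul a21 b12) O_d)) (O_mul a22 b22) using 1
    field_simp
  · convert O_add (O_add (O_mul a00 b02) (O_mul (O_mul a01 b12) O_d)) (O_mul a02 b22) using 1
    ring
  · convert O_add (O_add (O_mul a10 b00) (O_mul a11 b10)) (O_mul a12 b20) using 1
    field_simp
  · convert O_add (O_add (O_mul a20 b00) (O_mul (O_mul a21 b10) O_d)) (O_mul a22 b20) using 1
    field_simp
  · convert O_add (O_add (O_mul a20 b01) (O_mul a21 b11)) (O_mul a22 b21) using 1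
    field_simp

lemma U_iff (M : Matrix (Fin 3) (Fin 3) ℂ) : Mᴴ * matJ * M = matJ ↔ ∀ i j,
    (starRingEnd ℂ) (M 2 i) * M 0 j + (starRingEnd ℂ) (M 1 i) * M 1 j
      + (starRingEnd ℂ) (M 0 i) * M 2 j = matJ i j := by
  rw [← Matrix.ext_iff]
  refine forall_congr' fun i => forall_congr' fun j => ?_
  simp [Matrix.mul_apply, Fin.sum_univ_three, matJ]

lemma Gamma_one : GammaS11 1 := by
  refine ⟨inU21_of (by simp), ?_⟩
  simp [O_one, O_zero]

lemma d_dd : isq11 * (isq11 / 11) = ((-1 : ℤ) : ℂ) := by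
  push_cast; linear_combination d_sq / 11

lemma Gamma_I0 : GammaS11 I₀ := by
  rw [I0_eq]
  refine ⟨inU21_of ((U_iff _).2 ?_), ?_⟩
  · intro i j
    have := d_sq
    have h3 : isq11 * isq11 / 11 = -1 := by rw [this]; norm_num
    fin_cases i <;> fin_cases j <;> simp [matJ, d_conj, map_ofNat] <;> first | done | linear_combination -d_sq / 11
  · have h : isq11 / isq11 = 1 := div_self d_ne
    simp [O_one, O_zero, h]
    rw [d_dd]; exact O_int _

lemma Gamma_R1 : GammaS11 R₁ := by
  refine ⟨inU21_of ((U_iff _).2 ?_), ?_⟩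
  · intro i j
    fin_cases i <;> fin_cases j <;> simp [matJ, R₁]
  · simp [O_one, O_zero, R₁, O_neg O_one]

lemma Gamma_T : GammaS11 T := by
  rw [T_eq]
  refine ⟨inU21_of ((U_iff _).2 ?_), ?_⟩
  · intro i j
    fin_cases i <;> fin_cases j <;> simp [matJ, d_conj, map_ofNat] <;> ring
  · simp [O_one, O_zero]
    rw [d_dd]; exact O_int _

lemma Gamma_Tinv : GammaS11 Tinv := by
  rw [Tinv]
  refine ⟨inU21_of ((U_iff _).2 ?_), ?_⟩
  · intro i j
    fin_cases i <;> fin_cases j <;> simp [matJ, d_conj, map_ofNat] <;> ring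
  · simp [O_one, O_zero]
    rw [d_dd]; exact O_neg (O_int _)

lemma Gamma_R2 : GammaS11 R₂ := by
  rw [R2_eq]
  refine ⟨inU21_of ((U_iff _).2 ?_), ?_⟩
  · intro i j
    fin_cases i <;> fin_cases j <;> simp [matJ, d_conj, map_ofNat, om_eq] <;> linear_combination d_sq / 11
  · simp [O_one, O_zero, O_neg O_one]
    rw [← mul_assoc, d_dd]; exact O_mul (O_int _) O_om

lemma Gamma_R3 : GammaS11 R₃ := by
  rw [R3_eq]
  refine ⟨inU21_of ((U_iff _).2 ?_), ?_⟩
  · intro i j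
    fin_cases i <;> fin_cases j <;> simp [matJ, d_conj, map_ofNat, om_eq] <;> first | done | ring1 | linear_combination -d_sq / 4
  · simp [O_one, O_zero, O_neg O_one, O_om]
    constructor
    · exact ⟨1, -1, by rw [om_eq]; push_cast; ring⟩
    · exact ⟨1, -3, by rw [om_eq]; push_cast; linear_combination d_sq / 22⟩

abbrev Mat := Matrix (Fin 3) (Fin 3) ℂ

/-- The generators with their inverses. -/
def S : Set Mat := {I₀, R₁, R₂, R₃, T, I₀⁻¹, R₁⁻¹, R₂⁻¹, R₃⁻¹, T⁻¹}

/-- Words that are used for the reduction. -/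
def W : Submonoid Mat := Submonoid.closure {I₀, R₁, R₂, R₃, T, Tinv}

lemma W_I0 : I₀ ∈ W := Submonoid.subset_closure (by simp)
lemma W_R1 : R₁ ∈ W := Submonoid.subset_closure (by simp)
lemma W_R2 : R₂ ∈ W := Submonoid.subset_closure (by simp)
lemma W_R3 : R₃ ∈ W := Submonoid.subset_closure (by simp)
lemma W_T : T ∈ W := Submonoid.subset_closure (by simp)
lemma W_Tinv : Tinv ∈ W := Submonoid.subset_closure (by simp)

lemma W_Gamma {g : Mat} (hg : g ∈ W) : GammaS11 g := by
  induction hg using Submonoid.closure_induction with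
  | mem x hx =>
    simp only [Set.mem_insert_iff, Set.mem_singleton_iff] at hx
    rcases hx with rfl | rfl | rfl | rfl | rfl | rfl
    · exact Gamma_I0
    · exact Gamma_R1
    · exact Gamma_R2
    · exact Gamma_R3
    · exact Gamma_T
    · exact Gamma_Tinv
  | one => exact Gamma_one
  | mul x y _ _ hx hy => exact Gamma_mul hx hy

lemma W_inv {g : Mat} (hg : g ∈ W) : ∃ h ∈ Submonoid.closure S, h * g = 1 := by
  have key : ∀ x : Mat, x⁻¹ ∈ S → GammaS11 x → ∃ h ∈ Submonoid.closure S, h * x = 1 :=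
    fun x hx hG => ⟨x⁻¹, Submonoid.subset_closure hx,
      Matrix.nonsing_inv_mul _ ((Matrix.isUnit_iff_isUnit_det _).1 hG.1.1)⟩
  induction hg using Submonoid.closure_induction with
  | mem x hx =>
    simp only [Set.mem_insert_iff, Set.mem_singleton_iff] at hx
    rcases hx with rfl | rfl | rfl | rfl | rfl | rfl
    · exact key _ (by simp [S]) Gamma_I0
    · exact key _ (by simp [S]) Gamma_R1
    · exact key _ (by simp [S]) Gamma_R2
    · exact key _ (by simp [S]) Gamma_R3
    · exact key _ (by simp [S]) Gamma_T
    · refine ⟨T, Submonoid.subset_closure (by simp [S]), ?_⟩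
      exact mul_eq_one_comm.1 Tinv_mul
  | one => exact ⟨1, one_mem _, by simp⟩
  | mul x y _ _ hx hy =>
    obtain ⟨h, hh, e⟩ := hx
    obtain ⟨k, hk, f⟩ := hy
    refine ⟨k * h, mul_mem hk hh, ?_⟩
    calc k * h * (x * y) = k * (h * x) * y := by simp only [Matrix.mul_assoc]
      _ = 1 := by rw [e, Matrix.mul_one, f]

/-- The conclusion. -/
def P (M : Mat) : Prop := ∃ ε : ℂ, (ε = 1 ∨ ε = -1) ∧ ∃ g ∈ Submonoid.closure S, M = ε • g

lemma P_of_W {g M : Mat} (hg : g ∈ W) (h : P (g * M)) : P M := by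
  obtain ⟨ε, hε, k, hk, e⟩ := h
  obtain ⟨j, hj, f⟩ := W_inv hg
  refine ⟨ε, hε, j * k, mul_mem hj hk, ?_⟩
  calc M = j * g * M := by rw [f, Matrix.one_mul]
    _ = ε • (j * k) := by rw [Matrix.mul_assoc, e, Matrix.mul_smul]

/-- Unipotent upper triangular matrices. -/
def U (l p : ℂ) : Mat := !![1, -(starRingEnd ℂ) l, p; 0, 1, l; 0, 0, 1]

lemma U_mul (l p m q : ℂ) : U l p * U m q = U (l + m) (p + q - (starRingEnd ℂ) l * m) := by
  ext i j
  fin_cases i <;> fin_cases j <;> simp [U, Matrix.mul_apply, Fin.sum_univ_three] <;> ring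

lemma R2R1 : R₂ * R₁ = U 1 (isq11 / 11 * ω₁₁) := by
  rw [R2_eq, R₁]
  ext i j
  fin_cases i <;> fin_cases j <;> simp [U, Matrix.mul_apply, Fin.sum_univ_three]

lemma R1R2 : R₁ * R₂ = U (-1) (isq11 / 11 * ω₁₁) := by
  rw [R2_eq, R₁]
  ext i j
  fin_cases i <;> fin_cases j <;> simp [U, Matrix.mul_apply, Fin.sum_univ_three]

lemma R3R1 : R₃ * R₁ = U ω₁₁ (-3/2 + isq11 / 22) := by
  rw [R3_eq, R₁]
  ext i j
  fin_cases i <;> fin_cases j <;> simp [U, Matrix.mul_apply, Fin.sum_univ_three, om_eq, d_conj, map_ofNat] <;> ring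

lemma R1R3 : R₁ * R₃ = U (-ω₁₁) (-3/2 + isq11 / 22) := by
  rw [R3_eq, R₁]
  ext i j
  fin_cases i <;> fin_cases j <;> simp [U, Matrix.mul_apply, Fin.sum_univ_three, om_eq, d_conj, map_ofNat] <;> ring

/-- Translations lengths that are realised. -/
def H : AddSubmonoid ℂ where
  carrier := {l | ∃ p, U l p ∈ W}
  zero_mem' := ⟨0, by
    convert one_mem W
    ext i j
    fin_cases i <;> fin_cases j <;> simp [U]⟩
  add_mem' := by
    rintro a b ⟨p, hp⟩ ⟨q, hq⟩
    exact ⟨_, by rw [← U_mul]; exact mul_mem hp hq⟩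

lemma zmul_mem {l : ℂ} (h1 : l ∈ H) (h2 : -l ∈ H) (n : ℤ) : (n : ℂ) * l ∈ H := by
  obtain ⟨k, rfl | rfl⟩ := n.eq_nat_or_neg
  · simpa using nsmul_mem h1 k
  · simpa using nsmul_mem h2 k

lemma H_O {l : ℂ} (h : inO11 l) : ∃ p, U l p ∈ W := by
  obtain ⟨a, b, rfl⟩ := h
  have : (a : ℂ) * 1 + b * ω₁₁ ∈ H := add_mem
    (zmul_mem ⟨_, R2R1 ▸ mul_mem W_R2 W_R1⟩ ⟨_, R1R2 ▸ mul_mem W_R1 W_R2⟩ a)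
    (zmul_mem ⟨_, R3R1 ▸ mul_mem W_R3 W_R1⟩ ⟨_, R1R3 ▸ mul_mem W_R1 W_R3⟩ b)
  rw [mul_one] at this
  exact this

lemma T_pow (n : ℕ) : T ^ n = U 0 (n * (isq11 / 11)) := by
  induction n with
  | zero => ext i j; fin_cases i <;> fin_cases j <;> simp [U]
  | succ n ih =>
    have : T = U 0 (isq11 / 11) := by
      rw [T_eq]; ext i j; fin_cases i <;> fin_cases j <;> simp [U]
    rw [pow_succ, ih, this, U_mul]
    congr 1
    · simp
    · push_cast; simp; ring

lemma Tinv_pow (n : ℕ) : Tinv ^ n = U 0 (-n * (isq11 / 11)) := by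
  induction n with
  | zero => ext i j; fin_cases i <;> fin_cases j <;> simp [U]
  | succ n ih =>
    have : Tinv = U 0 (-(isq11 / 11)) := by
      rw [Tinv]; ext i j; fin_cases i <;> fin_cases j <;> simp [U]
    rw [pow_succ, ih, this, U_mul]
    congr 1
    · simp
    · push_cast; simp; ring

lemma W_vert (k : ℤ) : U 0 (k * (isq11 / 11)) ∈ W := by
  obtain ⟨n, rfl | rfl⟩ := k.eq_nat_or_neg
  · have := pow_mem W_T n
    rw [T_pow] at this; simpa using this
  · have := pow_mem W_Tinv n
    rw [Tinv_pow] at this; simpa using this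

/-! The stabiliser of infinity. -/

lemma P_U {l p : ℂ} (hG : GammaS11 (U l p)) (ε : ℂ) (hε : ε = 1 ∨ ε = -1) : P (ε • U l p) := by
  have hl : inO11 l := by have := hG.2.2.2.2.1; simpa [U] using this
  obtain ⟨q, hq⟩ := H_O (O_neg hl)
  have hG2 := Gamma_mul (W_Gamma hq) hG
  apply P_of_W hq
  rw [Matrix.mul_smul, U_mul, neg_add_cancel]
  rw [U_mul, neg_add_cancel] at hG2
  generalize q + p - (starRingEnd ℂ) (-l) * l = r at *
  have h1 := (U_iff _).1 hG2.1.2 2 2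
  have h2 : inO11 (isq11 * r) := by have := hG2.2.2.2.2.2.2.1; simpa [U] using this
  simp [U, matJ] at h1
  have hre : r.re = 0 := by
    have := congrArg Complex.re h1
    simp at this; linarith
  obtain ⟨n, hn⟩ := O_real h2 (by simp [Complex.mul_im, d_re, hre])
  have : r = (-n : ℤ) * (isq11 / 11) := by
    push_cast; rw [← hn]; linear_combination (r / 11) * d_sq
  apply P_of_W (W_vert n)
  refine ⟨ε, hε, 1, one_mem _, ?_⟩
  rw [Matrix.mul_smul, this, U_mul]
  congr 1
  ext i j; fin_cases i <;> fin_cases j <;> simp [U]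

lemma Gamma_smul {M : Mat} (hM : GammaS11 M) {ε : ℂ} (hε : ε = 1 ∨ ε = -1) :
    GammaS11 (ε • M) := by
  obtain ⟨⟨_, u⟩, h⟩ := hM
  refine ⟨inU21_of ?_, ?_⟩
  · rcases hε with rfl | rfl <;> simpa using u
  · obtain ⟨a, b, c, d, e, f, g, h, i⟩ := h
    rcases hε with rfl | rfl
    · simp only [one_smul]; exact ⟨a, b, c, d, e, f, g, h, i⟩
    · simp only [Matrix.smul_apply, smul_eq_mul, mul_neg, neg_mul, one_mul, neg_div]
      exact ⟨O_neg a, O_neg b, O_neg c, O_neg d, O_neg e, O_neg f, O_neg g, O_neg h, O_neg i⟩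

lemma P_smul {M : Mat} {ε : ℂ} (hε : ε = 1 ∨ ε = -1) (h : P (ε • M)) : P M := by
  obtain ⟨η, hη, g, hg, e⟩ := h
  refine ⟨ε * η, ?_, g, hg, ?_⟩
  · rcases hε with rfl | rfl <;> rcases hη with rfl | rfl <;> simp
  · rw [mul_smul, ← e, smul_smul]
    rcases hε with rfl | rfl <;> simp

lemma P_upper1 {M : Mat} (hG : GammaS11 M) (h10 : M 1 0 = 0) (h20 : M 2 0 = 0) (h21 : M 2 1 = 0)
    (h00 : M 0 0 = 1) (h11 : M 1 1 = 1) (h22 : M 2 2 = 1) : P M := by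
  have h := (U_iff _).1 hG.1.2 1 2
  have h01 : M 0 1 = -(starRingEnd ℂ) (M 1 2) := by
    have := congrArg (starRingEnd ℂ) h
    simp [matJ, h21, h11, h22] at this
    linear_combination this
  have : M = U (M 1 2) (M 0 2) := by
    ext i j; fin_cases i <;> fin_cases j <;> simp [U, *]
  rw [this] at hG ⊢
  simpa using P_U hG 1 (Or.inl rfl)

lemma P_upper {M : Mat} (hG : GammaS11 M) (h20 : M 2 0 = 0) : P M := by
  have hu := (U_iff _).1 hG.1.2
  have h10 : M 1 0 = 0 := by
    have := hu 0 0
    simpa [h20, matJ] using this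
  have e02 : (starRingEnd ℂ) (M 0 0) * M 2 2 = 1 := by
    have := hu 0 2
    simpa [h20, h10, matJ] using this
  have n00 : M 0 0 ≠ 0 := by intro h; simp [h] at e02
  have h21 : M 2 1 = 0 := by
    have := hu 0 1
    simpa [h20, h10, matJ, n00] using this
  have e11 : (starRingEnd ℂ) (M 1 1) * M 1 1 = 1 := by
    have := hu 1 1
    simpa [h21, matJ] using this
  have u1 : M 1 1 = 1 ∨ M 1 1 = -1 := by
    apply O_unit hG.2.2.2.1
    rw [mul_comm, Complex.mul_conj] at e11
    exact_mod_cast e11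
  have u0 : M 0 0 = 1 ∨ M 0 0 = -1 := by
    apply O_unit hG.2.1
    have := congrArg Complex.normSq e02
    rw [Complex.normSq_mul, Complex.normSq_conj, Complex.normSq_one] at this
    obtain ⟨a, ha⟩ := O_normSq hG.2.1
    obtain ⟨b, hb⟩ := O_normSq hG.2.2.2.2.2.1
    have h1 := Complex.normSq_nonneg (M 0 0)
    rw [ha] at h1 ⊢
    rw [ha, hb] at this
    have h2 : a * b = 1 := by exact_mod_cast this
    have h3 : 0 ≤ a := by exact_mod_cast h1
    have : a = 1 := Int.eq_one_or_neg_one_of_mul_eq_one h2 |>.resolve_right (by omega)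
    simp [this]
  apply P_smul u0
  have hG2 := Gamma_smul hG u0
  have e22 : M 0 0 * M 2 2 = 1 := by
    rcases u0 with h | h <;> simpa [h] using e02
  have e00 : M 0 0 * M 0 0 = 1 := by
    rcases u0 with h | h <;> simp [h]
  have e1 : M 0 0 * M 1 1 = 1 ∨ M 0 0 * M 1 1 = -1 := by
    rcases u0 with h | h <;> rcases u1 with h' | h' <;> simp [h, h']
  rcases e1 with e1 | e1
  · apply P_upper1 hG2 <;> simp [*]
  · apply P_of_W W_R1
    have hG3 := Gamma_mul Gamma_R1 hG2
    apply P_upper1 hG3 <;> simp [R₁, Matrix.mul_apply, Fin.sum_univ_three, *]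

/-! The descent. -/

lemma cover_box (x y : ℝ) (hx0 : 0 ≤ x) (hx1 : x ≤ 1 / 2) (hy0 : -(1 / 4) ≤ y) (hy1 : y ≤ 0) :
    x ^ 2 + 11 * y ^ 2 ≤ 0.522 ∨ (x - 1 / 6) ^ 2 + 11 * (y + 1 / 6) ^ 2 ≤ 0.174 ∨
      (1 / 2 - x - 1 / 6) ^ 2 + 11 * (-(1 / 2) - y + 1 / 6) ^ 2 ≤ 0.174 := by
  rcases le_total (-0.15) y with h | h
  · left; nlinarith
  · right
    rcases le_total x 0.47 with h' | h'
    · left; nlinarith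
    · rcases le_total (-0.23) y with h2 | h2
      · left; nlinarith
      · right; nlinarith

/-- The three good regions. -/
def Good (x y : ℝ) : Prop :=
  x ^ 2 + 11 * y ^ 2 ≤ 0.522 ∨ (x - 1 / 6) ^ 2 + 11 * (y + 1 / 6) ^ 2 ≤ 0.174 ∨
    (x + 1 / 6) ^ 2 + 11 * (y + 1 / 6) ^ 2 ≤ 0.174

lemma cover (x y : ℝ) : ∃ m n : ℤ, Good (x + m + n / 2) (y + n / 2) ∨
    Good (-x + m + n / 2) (-y + n / 2) := by
  -- first for points with `y` in `[-1/4, 0]`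
  have step : ∀ x y : ℝ, -(1 / 4) ≤ y → y ≤ 0 → ∃ m n : ℤ, Good (x + m + n / 2) (y + n / 2) ∨
      Good (-x + m + n / 2) (-y + n / 2) := by
    intro x y h0 h1
    have hr := abs_le.1 (abs_sub_round x)
    set r := round x
    rcases le_total 0 (x - r) with h | h
    · rcases cover_box (x - r) y h (by linarith [hr.2]) h0 h1 with h | h | h
      · refine ⟨-r, 0, Or.inl (Or.inl ?_)⟩
        convert h using 3 <;> push_cast <;> ring
      · refine ⟨-r, 0, Or.inl (Or.inr (Or.inl ?_))⟩
        convert h using 3 <;> push_cast <;> ring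
      · refine ⟨r + 1, -1, Or.inr (Or.inr (Or.inl ?_))⟩
        convert h using 3 <;> push_cast <;> ring
    · rcases cover_box (-(x - r)) y (by linarith) (by linarith [hr.1]) h0 h1 with h | h | h
      · refine ⟨-r, 0, Or.inl (Or.inl ?_)⟩
        convert h using 1; push_cast; ring
      · refine ⟨-r, 0, Or.inl (Or.inr (Or.inr ?_))⟩
        convert h using 1; push_cast; ring
      · refine ⟨r, -1, Or.inr (Or.inr (Or.inr ?_))⟩
        convert h using 1; push_cast; ring
  have hr := abs_le.1 (abs_sub_round (2 * y))
  set r := round (2 * y)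
  rcases le_total (y - r / 2) 0 with h | h
  · obtain ⟨m, n, h | h⟩ := step (x - r / 2) (y - r / 2) (by linarith [hr.1]) h
    · refine ⟨m, n - r, Or.inl ?_⟩
      convert h using 1 <;> push_cast <;> ring
    · refine ⟨m, n + r, Or.inr ?_⟩
      convert h using 1 <;> push_cast <;> ring
  · obtain ⟨m, n, h | h⟩ := step (-(x - r / 2)) (-(y - r / 2)) (by linarith [hr.2]) (by linarith)
    · refine ⟨m, n + r, Or.inr ?_⟩
      convert h using 1 <;> push_cast <;> ring
    · refine ⟨m, n - r, Or.inl ?_⟩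
      convert h using 1 <;> push_cast <;> ring

/-- The lower left entry can be made smaller. -/
def Desc (M : Mat) : Prop := ∃ g ∈ W, Complex.normSq ((g * M) 2 0) < Complex.normSq (M 2 0)

lemma Desc_of {M g : Mat} (hg : g ∈ W) (h0 : M 2 0 ≠ 0) {r : ℂ} (h : (g * M) 2 0 = r * M 2 0)
    (hr : Complex.normSq r < 1) : Desc M := by
  refine ⟨g, hg, ?_⟩
  rw [h, Complex.normSq_mul]
  have := Complex.normSq_pos.2 h0
  nlinarith

lemma exists_k (E : ℂ) (c : ℝ) (h : E.im ^ 2 ≤ c) : ∃ k : ℤ, Complex.normSq (E - k) ≤ c + 1 / 4 := by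
  refine ⟨round E.re, ?_⟩
  have hr := abs_le.1 (abs_sub_round E.re)
  rw [Complex.normSq_apply]
  simp only [Complex.sub_re, Complex.sub_im, Complex.intCast_re, Complex.intCast_im]
  nlinarith [hr.1, hr.2]

lemma isotropic {M : Mat} (hG : GammaS11 M) (h0 : M 2 0 ≠ 0) :
    (M 0 0 / M 2 0).re = -((M 1 0 / M 2 0).re ^ 2 + (M 1 0 / M 2 0).im ^ 2) / 2 := by
  have h := (U_iff _).1 hG.1.2 0 0
  obtain ⟨z, hz⟩ : ∃ z, z = M 1 0 / M 2 0 := ⟨_, rfl⟩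
  obtain ⟨p, hp⟩ : ∃ p, p = M 0 0 / M 2 0 := ⟨_, rfl⟩
  rw [← hz, ← hp]
  rw [eq_div_iff h0] at hz hp
  rw [← hz, ← hp] at h
  have hc : (starRingEnd ℂ) (M 2 0) ≠ 0 := by simpa using h0
  have h2 : p + (starRingEnd ℂ) z * z + (starRingEnd ℂ) p = 0 := by
    apply mul_left_cancel₀ (mul_ne_zero h0 hc)
    simp only [map_mul] at h
    simp [matJ] at h
    linear_combination h
  have := congrArg Complex.re h2
  simp at this
  linarith

lemma desc0 {M : Mat} (hG : GammaS11 M) (h0 : M 2 0 ≠ 0)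
    (h : (M 1 0 / M 2 0).re ^ 2 + (M 1 0 / M 2 0).im ^ 2 ≤ 0.522) : Desc M := by
  have hi := isotropic hG h0
  obtain ⟨z, hz⟩ : ∃ z, z = M 1 0 / M 2 0 := ⟨_, rfl⟩
  obtain ⟨p, hp⟩ : ∃ p, p = M 0 0 / M 2 0 := ⟨_, rfl⟩
  rw [← hz, ← hp] at hi
  rw [← hz] at h
  rw [eq_div_iff h0] at hz hp
  have hE : (isq11 * p).im ^ 2 ≤ 0.7495 := by
    simp only [Complex.mul_im, d_re, d_im, hi]
    have h' : 0 ≤ z.re ^ 2 + z.im ^ 2 := by positivity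
    generalize z.re ^ 2 + z.im ^ 2 = n at *
    have : (0 * p.im + √11 * (-n / 2)) ^ 2 = 11 / 4 * n ^ 2 := by
      linear_combination (n ^ 2 / 4) * q_sq
    rw [this]; nlinarith
  obtain ⟨k, hk⟩ := exists_k _ _ hE
  refine Desc_of (mul_mem W_I0 (W_vert k)) h0 (r := isq11 * p - k) ?_ (lt_of_le_of_lt hk (by norm_num))
  simp [I0_eq, U, Matrix.mul_apply, Fin.sum_univ_three, ← hp]
  linear_combination (k * M 2 0 / 11) * d_sq

lemma desc1 {M : Mat} (hG : GammaS11 M) (h0 : M 2 0 ≠ 0)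
    (h : ((M 1 0 / M 2 0).re + 1 / 6) ^ 2 + ((M 1 0 / M 2 0).im + Real.sqrt 11 / 6) ^ 2 ≤ 0.174) :
    Desc M := by
  have hi := isotropic hG h0
  obtain ⟨z, hz⟩ : ∃ z, z = M 1 0 / M 2 0 := ⟨_, rfl⟩
  obtain ⟨p, hp⟩ : ∃ p, p = M 0 0 / M 2 0 := ⟨_, rfl⟩
  rw [← hz, ← hp] at hi
  rw [← hz] at h
  rw [eq_div_iff h0] at hz hp
  have hE : (isq11 * p - (isq11 * z - 1) * (1 - ω₁₁) * ((1 / 3 : ℝ) : ℂ)).im ^ 2 ≤ 0.0833 := by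
    have h' : 0 ≤ (z.re + 1 / 6) ^ 2 + (z.im + Real.sqrt 11 / 6) ^ 2 := by positivity
    obtain ⟨n, hn⟩ : ∃ n, n = (z.re + 1 / 6) ^ 2 + (z.im + Real.sqrt 11 / 6) ^ 2 := ⟨_, rfl⟩
    rw [← hn] at h h'
    have : (isq11 * p - (isq11 * z - 1) * (1 - ω₁₁) * ((1 / 3 : ℝ) : ℂ)).im = - √11 * n / 2 := by
      simp only [Complex.mul_im, Complex.mul_re, Complex.sub_re, Complex.sub_im, d_re, d_im, om_re,
        om_im, Complex.one_re, Complex.one_im, Complex.ofReal_re, Complex.ofReal_im, hi, hn]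
      linear_combination (√11 / 72) * q_sq
    rw [this]
    have : (-√11 * n / 2) ^ 2 = 11 / 4 * n ^ 2 := by
      linear_combination (n ^ 2 / 4) * q_sq
    rw [this]; nlinarith
  obtain ⟨k, hk⟩ := exists_k _ _ hE
  refine Desc_of (mul_mem (mul_mem W_I0 W_R2) (mul_mem W_I0 (W_vert k))) h0
    (r := (-ω₁₁) * (isq11 * p - (isq11 * z - 1) * (1 - ω₁₁) * ((1 / 3 : ℝ) : ℂ) - k)) ?_ ?_
  · simp [I0_eq, R2_eq, U, Matrix.mul_apply, Fin.sum_univ_three, ← hp, ← hz]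
    have h1 := d_sq
    have h2 := om_sq
    grind
  · have : Complex.normSq (-ω₁₁) = 3 := by
      have := normSq_O 0 1
      simpa using this
    rw [Complex.normSq_mul, this]
    linarith

lemma desc2 {M : Mat} (hG : GammaS11 M) (h0 : M 2 0 ≠ 0)
    (h : ((M 1 0 / M 2 0).re - 1 / 6) ^ 2 + ((M 1 0 / M 2 0).im + Real.sqrt 11 / 6) ^ 2 ≤ 0.174) :
    Desc M := by
  have hi := isotropic hG h0
  obtain ⟨z, hz⟩ : ∃ z, z = M 1 0 / M 2 0 := ⟨_, rfl⟩
  obtain ⟨p, hp⟩ : ∃ p, p = M 0 0 / M 2 0 := ⟨_, rfl⟩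
  rw [← hz, ← hp] at hi
  rw [← hz] at h
  rw [eq_div_iff h0] at hz hp
  have hE : (isq11 * p + (isq11 * z - 1) * ω₁₁ * ((1 / 3 : ℝ) : ℂ)).im ^ 2 ≤ 0.0833 := by
    have h' : 0 ≤ (z.re - 1 / 6) ^ 2 + (z.im + Real.sqrt 11 / 6) ^ 2 := by positivity
    obtain ⟨n, hn⟩ : ∃ n, n = (z.re - 1 / 6) ^ 2 + (z.im + Real.sqrt 11 / 6) ^ 2 := ⟨_, rfl⟩
    rw [← hn] at h h'
    have : (isq11 * p + (isq11 * z - 1) * ω₁₁ * ((1 / 3 : ℝ) : ℂ)).im = - √11 * n / 2 := by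
      simp only [Complex.mul_im, Complex.mul_re, Complex.sub_re, Complex.sub_im, Complex.add_im,
        d_re, d_im, om_re,
        om_im, Complex.one_re, Complex.one_im, Complex.ofReal_re, Complex.ofReal_im, hi, hn]
      linear_combination (√11 / 72) * q_sq
    rw [this]
    have : (-√11 * n / 2) ^ 2 = 11 / 4 * n ^ 2 := by
      linear_combination (n ^ 2 / 4) * q_sq
    rw [this]; nlinarith
  obtain ⟨k, hk⟩ := exists_k _ _ hE
  refine Desc_of (mul_mem (mul_mem W_I0 (mul_mem W_Tinv W_R2)) (mul_mem W_I0 (W_vert k))) h0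
    (r := (1 - ω₁₁) * (isq11 * p + (isq11 * z - 1) * ω₁₁ * ((1 / 3 : ℝ) : ℂ) - k)) ?_ ?_
  · simp [I0_eq, R2_eq, Tinv, U, Matrix.mul_apply, Fin.sum_univ_three, ← hp, ← hz]
    have h1 := d_sq
    have h2 := om_sq
    grind
  · have : Complex.normSq (1 - ω₁₁) = 3 := by
      have := normSq_O 1 (-1)
      simp at this
      rw [sub_eq_add_neg, this]; try norm_num
    rw [Complex.normSq_mul, this]
    linarith

lemma Desc_good {M : Mat} (hG : GammaS11 M) (h0 : M 2 0 ≠ 0) {x y : ℝ} (hg : Good x y)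
    (hx : (M 1 0 / M 2 0).re = x) (hy : (M 1 0 / M 2 0).im = Real.sqrt 11 * y) : Desc M := by
  have hq := q_sq
  rcases hg with h | h | h
  · apply desc0 hG h0
    rw [hx, hy]
    convert h using 1; linear_combination y ^ 2 * hq
  · apply desc2 hG h0
    rw [hx, hy]
    convert h using 1; linear_combination (y + 1 / 6) ^ 2 * hq
  · apply desc1 hG h0
    rw [hx, hy]
    convert h using 1; linear_combination (y + 1 / 6) ^ 2 * hq

lemma Desc_of_mul {M g : Mat} (hg : g ∈ W) (h : (g * M) 2 0 = M 2 0) (hd : Desc (g * M)) : Desc M := by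
  obtain ⟨k, hk, hlt⟩ := hd
  refine ⟨k * g, mul_mem hk hg, ?_⟩
  rw [Matrix.mul_assoc]
  rwa [h] at hlt

lemma Desc_all {M : Mat} (hG : GammaS11 M) (h0 : M 2 0 ≠ 0) : Desc M := by
  have hq := q_pos
  obtain ⟨m, n, h | h⟩ := cover (M 1 0 / M 2 0).re ((M 1 0 / M 2 0).im / Real.sqrt 11)
  · obtain ⟨p, hp⟩ := H_O (l := m + n * ω₁₁) ⟨m, n, rfl⟩
    have e2 : (U (m + n * ω₁₁) p * M) 2 0 = M 2 0 := by
      simp [U, Matrix.mul_apply, Fin.sum_univ_three]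
    have e1 : (U (m + n * ω₁₁) p * M) 1 0 / M 2 0 = M 1 0 / M 2 0 + (m + n * ω₁₁) := by
      simp [U, Matrix.mul_apply, Fin.sum_univ_three]
      field_simp
    apply Desc_of_mul hp e2
    apply Desc_good (Gamma_mul (W_Gamma hp) hG) (by rwa [e2]) h
    · rw [e2, e1]; simp [om_re]; ring
    · rw [e2, e1]; simp [om_im]; field_simp
  · obtain ⟨p, hp⟩ := H_O (l := m + n * ω₁₁) ⟨m, n, rfl⟩
    have e2 : (U (m + n * ω₁₁) p * R₁ * M) 2 0 = M 2 0 := by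
      simp [U, R₁, Matrix.mul_apply, Fin.sum_univ_three]
    have e1 : (U (m + n * ω₁₁) p * R₁ * M) 1 0 / M 2 0 = - (M 1 0 / M 2 0) + (m + n * ω₁₁) := by
      simp [U, R₁, Matrix.mul_apply, Fin.sum_univ_three]
      field_simp
    have hW := mul_mem hp W_R1
    apply Desc_of_mul hW e2
    apply Desc_good (Gamma_mul (W_Gamma hW) hG) (by rwa [e2]) h
    · rw [e2, e1]; simp [om_re]; ring
    · rw [e2, e1]; simp [om_im]; field_simp

lemma main (N : ℕ) : ∀ M : Mat, GammaS11 M → Complex.normSq (M 2 0 / isq11) < N → P M := by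
  induction N with
  | zero =>
    intro M _ h
    have := Complex.normSq_nonneg (M 2 0 / isq11)
    rw [Nat.cast_zero] at h; linarith
  | succ N ih =>
    intro M hG h
    by_cases h0 : M 2 0 = 0
    · exact P_upper hG h0
    obtain ⟨g, hg, hlt⟩ := Desc_all hG h0
    have hG2 := Gamma_mul (W_Gamma hg) hG
    apply P_of_W hg
    apply ih _ hG2
    obtain ⟨a, ha⟩ := O_normSq hG.2.2.2.2.2.2.2.2.1
    obtain ⟨b, hb⟩ := O_normSq hG2.2.2.2.2.2.2.2.2.1
    have hl : Complex.normSq ((g * M) 2 0 / isq11) < Complex.normSq (M 2 0 / isq11) := by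
      rw [Complex.normSq_div, Complex.normSq_div]
      exact div_lt_div_of_pos_right hlt (Complex.normSq_pos.2 d_ne)
    rw [ha, hb] at hl
    rw [ha] at h
    rw [hb]
    have h1 : b < a := by exact_mod_cast hl
    have h2 : a < N + 1 := by exact_mod_cast h
    have h3 : b < N := by omega
    exact_mod_cast h3

end GS
/-- `Γ_s^(11)` is generated, modulo `±I`, by `I₀, R₁, R₂, R₃, T`. -/
theorem gammaS11_generated (M : Matrix (Fin 3) (Fin 3) ℂ) (hM : GammaS11 M) :
    ∃ (ε : ℂ) (L : List (Matrix (Fin 3) (Fin 3) ℂ)),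
      (ε = 1 ∨ ε = -1) ∧
      (∀ A ∈ L, A ∈ ({I₀, R₁, R₂, R₃, T, I₀⁻¹, R₁⁻¹, R₂⁻¹, R₃⁻¹, T⁻¹} :
        Set (Matrix (Fin 3) (Fin 3) ℂ))) ∧
      M = ε • L.prod := by
  obtain ⟨N, hN⟩ := exists_nat_gt (Complex.normSq (M 2 0 / isq11))
  obtain ⟨ε, hε, g, hg, e⟩ := GS.main N M hM hN
  obtain ⟨L, hL, rfl⟩ := Submonoid.exists_list_of_mem_closure hg
  exact ⟨ε, L, hε, hL, e⟩
end
end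

section
/- For d ∈ {2,7,11}, let H^(d) = Γ^(d) ∩ Γ_s^(d), regarded as a subgroup of both Γ^(d) and Γ_s^(d). Then H^(2) has index 3 both in Γ^(2) and in Γ_s^(2), and for d ∈ {7,11} the subgroup H^(d) has index d+1 both in Γ^(d) and in Γ_s^(d). In particular Γ^(d) and Γ_s^(d) are commensurable, sharing the common subgroup H^(d) of equal finite index in both. -/
noncomputable section

open Matrix

/-- `i√d`. -/
def isqd (d : ℕ) : ℂ := Complex.I * (Real.sqrt d : ℂ)

/-- The ℤ-module generator of `O_d` over `ℤ`: `ω_d = (1+i√d)/2` if `d ≡ 3 (mod 4)`,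
and `i√d` otherwise. -/
def OdGen (d : ℕ) : ℂ :=
  if d % 4 = 3 then (1 + Complex.I * (Real.sqrt d : ℂ)) / 2
  else Complex.I * (Real.sqrt d : ℂ)

/-- Membership in the ring of integers `O_d`. -/
def inOd (d : ℕ) (z : ℂ) : Prop := ∃ a b : ℤ, z = (a : ℂ) + (b : ℂ) * OdGen d

/-- The Picard modular group `Γ^(d)` (as a set of matrices). -/
def GammaPd (d : ℕ) : Set (Matrix (Fin 3) (Fin 3) ℂ) :=
  {M | inU21 M ∧ ∀ j k : Fin 3, inOd d (M j k)}

/-- The sister group `Γ_s^(d)` (as a set of matrices). -/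
def GammaSd (d : ℕ) : Set (Matrix (Fin 3) (Fin 3) ℂ) :=
  {M | inU21 M ∧ inOd d (M 0 0) ∧ inOd d (M 0 1) ∧ inOd d (M 1 1) ∧ inOd d (M 1 2) ∧
    inOd d (M 2 2) ∧ inOd d (isqd d * M 0 2) ∧ inOd d (M 1 0 / isqd d) ∧
    inOd d (M 2 0 / isqd d) ∧ inOd d (M 2 1 / isqd d)}

/-- `H^(d) = Γ^(d) ∩ Γ_s^(d)`. -/
def Hd (d : ℕ) : Set (Matrix (Fin 3) (Fin 3) ℂ) := GammaPd d ∩ GammaSd d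

/-! ### Arithmetic of `O_d` -/

/-- Candidate reduction map `O_d → ℤ/d`, totalised on `ℂ`. -/
def rhoAux (d : ℕ) (g : ZMod d) (z : ℂ) : ZMod d :=
  ((⌊z.re - (⌊z.im / (OdGen d).im⌋ : ℝ) * (OdGen d).re⌋ : ℤ) : ZMod d)
    + ((⌊z.im / (OdGen d).im⌋ : ℤ) : ZMod d) * g

/-- The arithmetic facts on `O_d` used in the proof. -/
structure GoodD (d : ℕ) (ρ : ℂ → ZMod d) : Prop where
  prime : d.Prime
  int : ∀ n : ℤ, inOd d n
  add : ∀ z w, inOd d z → inOd d w → inOd d (z + w)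
  mul : ∀ z w, inOd d z → inOd d w → inOd d (z * w)
  conj : ∀ z, inOd d z → inOd d (starRingEnd ℂ z)
  rint : ∀ n : ℤ, ρ n = n
  radd : ∀ z w, inOd d z → inOd d w → ρ (z + w) = ρ z + ρ w
  rmul : ∀ z w, inOd d z → inOd d w → ρ (z * w) = ρ z * ρ w
  rconj : ∀ z, inOd d z → ρ (starRingEnd ℂ z) = ρ z
  ker : ∀ z, inOd d z → (ρ z = 0 ↔ inOd d (z / isqd d))
  pi_mem : inOd d (isqd d)
  pi_ne : isqd d ≠ 0
  pi_conj : starRingEnd ℂ (isqd d) = - isqd d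

lemma rhoAux_eq (d : ℕ) (g : ZMod d) (h : (OdGen d).im ≠ 0) (a b : ℤ) :
    rhoAux d g ((a : ℂ) + (b : ℂ) * OdGen d) = (a : ZMod d) + (b : ZMod d) * g := by
  simp [rhoAux, h]

lemma good_of (d : ℕ) (hp : d.Prime) (tr nm c e : ℤ) (g : ZMod d)
    (him : (OdGen d).im ≠ 0)
    (hsq : OdGen d * OdGen d = tr * OdGen d - nm)
    (hconj : starRingEnd ℂ (OdGen d) = tr - OdGen d)
    (hpi : isqd d = c + e * OdGen d)
    (hpc : starRingEnd ℂ (isqd d) = - isqd d)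
    (hpn : isqd d ≠ 0)
    (hg2 : g * g = tr * g - nm) (hgc : (tr : ZMod d) - g = g)
    (hpg : (c : ZMod d) + e * g = 0)
    (hker : ∀ a b : ℤ, (a : ZMod d) + b * g = 0 →
      ∃ u v : ℤ, a = u * c - v * e * nm ∧ b = u * e + v * c + v * e * tr) :
    GoodD d (rhoAux d g) where
  prime := hp
  int n := ⟨n, 0, by simp⟩
  add := by
    rintro _ _ ⟨a, b, rfl⟩ ⟨a', b', rfl⟩
    exact ⟨a + a', b + b', by push_cast; ring⟩
  mul := by
    rintro _ _ ⟨a, b, rfl⟩ ⟨a', b', rfl⟩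
    exact ⟨a * a' - b * b' * nm, a * b' + b * a' + b * b' * tr, by
      push_cast; linear_combination (b * b' : ℂ) * hsq⟩
  conj := by
    rintro _ ⟨a, b, rfl⟩
    exact ⟨a + b * tr, -b, by simp [hconj]; ring⟩
  rint n := by
    have := rhoAux_eq d g him n 0
    simpa using this
  radd := by
    rintro _ _ ⟨a, b, rfl⟩ ⟨a', b', rfl⟩
    have : (a : ℂ) + b * OdGen d + (a' + b' * OdGen d)
      = ((a + a' : ℤ) : ℂ) + ((b + b' : ℤ) : ℂ) * OdGen d := by push_cast; ring
    rw [this, rhoAux_eq _ _ him, rhoAux_eq _ _ him, rhoAux_eq _ _ him]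
    push_cast; ring
  rmul := by
    rintro _ _ ⟨a, b, rfl⟩ ⟨a', b', rfl⟩
    have : ((a : ℂ) + b * OdGen d) * (a' + b' * OdGen d)
      = ((a * a' - b * b' * nm : ℤ) : ℂ) + ((a * b' + b * a' + b * b' * tr : ℤ) : ℂ) * OdGen d := by
      push_cast; linear_combination (b * b' : ℂ) * hsq
    rw [this, rhoAux_eq _ _ him, rhoAux_eq _ _ him, rhoAux_eq _ _ him]
    push_cast; linear_combination (-(b * b') : ZMod d) * hg2
  rconj := by
    rintro _ ⟨a, b, rfl⟩
    have : starRingEnd ℂ ((a : ℂ) + b * OdGen d)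
      = ((a + b * tr : ℤ) : ℂ) + ((-b : ℤ) : ℂ) * OdGen d := by simp [hconj]; ring
    rw [this, rhoAux_eq _ _ him, rhoAux_eq _ _ him]
    push_cast; linear_combination (b : ZMod d) * hgc
  ker := by
    rintro _ ⟨a, b, rfl⟩
    rw [rhoAux_eq _ _ him]
    constructor
    · intro h
      obtain ⟨u, v, rfl, rfl⟩ := hker a b h
      refine ⟨u, v, ?_⟩
      rw [div_eq_iff hpn, hpi]
      push_cast
      linear_combination (-(v * e) : ℂ) * hsq
    · rintro ⟨u, v, h⟩
      rw [div_eq_iff hpn, hpi] at h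
      have h2 : (a : ℂ) + b * OdGen d
        = ((u * c - v * e * nm : ℤ) : ℂ) + ((u * e + v * c + v * e * tr : ℤ) : ℂ) * OdGen d := by
        push_cast; linear_combination h + (v * e : ℂ) * hsq
      have h3 := congrArg (rhoAux d g) h2
      rw [rhoAux_eq _ _ him, rhoAux_eq _ _ him] at h3
      rw [h3]; push_cast
      linear_combination ((u : ZMod d) + v * g) * hpg - (v * e : ZMod d) * hg2
  pi_mem := ⟨c, e, hpi⟩
  pi_ne := hpn
  pi_conj := hpc

lemma isqd_conj (d : ℕ) : starRingEnd ℂ (isqd d) = - isqd d := by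
  simp [isqd]

lemma isqd_ne (d : ℕ) (h : 0 < d) : isqd d ≠ 0 := by
  have : (d : ℝ) ≠ 0 := by positivity
  simp [isqd]; omega

lemma isqd_sq (d : ℕ) : isqd d * isqd d = -(d : ℂ) := by
  have : ((Real.sqrt d : ℝ) : ℂ) * (Real.sqrt d : ℝ) = d := by
    rw [← Complex.ofReal_mul, Real.mul_self_sqrt (by positivity)]; simp
  unfold isqd
  linear_combination (Complex.I * Complex.I) * this + (d : ℂ) * Complex.I_mul_I

lemma OdGen_three (d : ℕ) (h : d % 4 = 3) : OdGen d = (1 + isqd d) / 2 := by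
  simp [OdGen, h, isqd]

lemma good_two : GoodD 2 (rhoAux 2 0) := by
  have hg : OdGen 2 = isqd 2 := by simp [OdGen, isqd]
  refine good_of 2 Nat.prime_two 0 2 0 1 0 ?_ ?_ ?_ ?_ (isqd_conj 2) (isqd_ne 2 (by norm_num))
    (by decide) (by decide) (by decide) ?_
  · rw [hg]; simp [isqd]
  · rw [hg, isqd_sq]; push_cast; ring
  · rw [hg, isqd_conj]; simp
  · rw [hg]; simp
  · intro a b h
    simp only [mul_zero, add_zero] at h
    rw [ZMod.intCast_zmod_eq_zero_iff_dvd] at h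
    obtain ⟨k, rfl⟩ := h
    exact ⟨b, -k, by push_cast; ring, by ring⟩

lemma good_three (d : ℕ) (hp : d.Prime) (h4 : d % 4 = 3) :
    GoodD d (rhoAux d (((d + 1) / 2 : ℕ) : ZMod d)) := by
  have hg := OdGen_three d h4
  obtain ⟨q, hq⟩ : ∃ q, d = 4 * q + 3 := ⟨d / 4, by omega⟩
  have e1 : (d + 1) / 2 = 2 * (q + 1) := by omega
  have hd0 : (4 : ZMod d) * q + 3 = 0 := by
    have h := congrArg (Nat.cast : ℕ → ZMod d) hq
    rw [ZMod.natCast_self] at h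
    push_cast at h
    exact h.symm
  have hs := isqd_sq d
  have hqc : (d : ℂ) = 4 * q + 3 := by rw [hq]; push_cast; ring
  rw [e1]
  refine good_of d hp 1 (q + 1) (-1) 2 _ ?_ ?_ ?_ ?_ (isqd_conj d) (isqd_ne d (by omega))
    ?_ ?_ ?_ ?_
  · rw [hg]; simp [isqd]; omega
  · rw [hg]; push_cast; linear_combination hs / 4 - hqc / 4
  · rw [hg, map_div₀, map_add, isqd_conj, map_one, Complex.conj_ofNat]; push_cast; ring
  · rw [hg]; push_cast; ring
  · push_cast; linear_combination ((q : ZMod d) + 1) * hd0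
  · push_cast; linear_combination - hd0
  · push_cast; linear_combination hd0
  · intro a b h
    have h2 : (((2 * a + b : ℤ)) : ZMod d) = 0 := by
      push_cast at h ⊢
      linear_combination 2 * h - (b : ZMod d) * hd0
    rw [ZMod.intCast_zmod_eq_zero_iff_dvd] at h2
    obtain ⟨k, hk⟩ := h2
    have hk' : 2 * a + b = (4 * q + 3) * k := by rw [hk]; congr 1; omega
    have hpar : ∃ m : ℤ, b + k = 2 * m := by
      refine ⟨2 * q * k + 2 * k - a, ?_⟩
      linear_combination hk'
    obtain ⟨m, hm⟩ := hpar
    refine ⟨m, -k, ?_, ?_⟩ <;> linarith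

/-! ### The unitary group -/

lemma matJ_sq : matJ * matJ = 1 := by
  ext i j; fin_cases i <;> fin_cases j <;> simp [matJ, Matrix.mul_apply, Fin.sum_univ_three]

lemma matJ_H : matJᴴ = matJ := by
  ext i j; fin_cases i <;> fin_cases j <;> simp [matJ]

/-- The inverse `J Mᴴ J` of a matrix of `U(2,1;J)`. -/
def adjJ (M : Matrix (Fin 3) (Fin 3) ℂ) : Matrix (Fin 3) (Fin 3) ℂ := matJ * Mᴴ * matJ

lemma adjJ_eq (M : Matrix (Fin 3) (Fin 3) ℂ) : adjJ M =
    !![star (M 2 2), star (M 1 2), star (M 0 2); star (M 2 1), star (M 1 1), star (M 0 1);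
      star (M 2 0), star (M 1 0), star (M 0 0)] := by
  ext i j; fin_cases i <;> fin_cases j <;>
    simp [adjJ, matJ, Matrix.mul_apply, Matrix.vecMul, dotProduct, Fin.sum_univ_three]

lemma inU21_of {M : Matrix (Fin 3) (Fin 3) ℂ} (h : adjJ M * M = 1) : inU21 M := by
  refine ⟨IsUnit.of_mul_eq_one_right _ h, ?_⟩
  calc Mᴴ * matJ * M = (matJ * matJ) * (Mᴴ * matJ * M) := by rw [matJ_sq, one_mul]
    _ = matJ * (adjJ M * M) := by simp only [adjJ, Matrix.mul_assoc]
    _ = matJ := by rw [h, mul_one]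

lemma inU21.left {M : Matrix (Fin 3) (Fin 3) ℂ} (h : inU21 M) : adjJ M * M = 1 := by
  have : adjJ M * M = matJ * (Mᴴ * matJ * M) := by simp only [adjJ, Matrix.mul_assoc]
  rw [this, h.2, matJ_sq]

lemma inU21.right {M : Matrix (Fin 3) (Fin 3) ℂ} (h : inU21 M) : M * adjJ M = 1 :=
  mul_eq_one_comm.mp h.left

lemma adjJ_mul (M N : Matrix (Fin 3) (Fin 3) ℂ) : adjJ (M * N) = adjJ N * adjJ M := by
  have : adjJ N * adjJ M = matJ * Nᴴ * (matJ * matJ) * Mᴴ * matJ := by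
    simp only [adjJ, Matrix.mul_assoc]
  rw [this, matJ_sq, adjJ, Matrix.conjTranspose_mul]
  simp only [Matrix.mul_assoc, Matrix.one_mul]

lemma adjJ_adjJ (M : Matrix (Fin 3) (Fin 3) ℂ) : adjJ (adjJ M) = M := by
  rw [adjJ_eq, adjJ_eq]
  ext i j; fin_cases i <;> fin_cases j <;> simp

lemma inU21.mul {M N : Matrix (Fin 3) (Fin 3) ℂ} (h : inU21 M) (h' : inU21 N) :
    inU21 (M * N) := by
  apply inU21_of
  rw [adjJ_mul, Matrix.mul_assoc, ← Matrix.mul_assoc (adjJ M), h.left, Matrix.one_mul, h'.left]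

lemma inU21.adj {M : Matrix (Fin 3) (Fin 3) ℂ} (h : inU21 M) : inU21 (adjJ M) := by
  apply inU21_of
  rw [adjJ_adjJ, h.right]

/-! ### Counting cosets -/

lemma card_cosets {ι : Type*} (G H : Set (Matrix (Fin 3) (Fin 3) ℂ))
    (hU : ∀ M ∈ G, inU21 M) (hHG : H ⊆ G)
    (h1 : 1 ∈ H)
    (hmul : ∀ M ∈ H, ∀ N ∈ H, M * N ∈ H) (hinv : ∀ M ∈ H, adjJ M ∈ H)
    (r : ι → Matrix (Fin 3) (Fin 3) ℂ) (hr : ∀ i, r i ∈ G)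
    (cover : ∀ γ ∈ G, ∃ i, adjJ (r i) * γ ∈ H)
    (sep : ∀ i j, adjJ (r i) * r j ∈ H → i = j) :
    Nat.card {S : Set (Matrix (Fin 3) (Fin 3) ℂ) // ∃ γ ∈ G, S = (γ * ·) '' H} = Nat.card ι := by
  symm
  refine Nat.card_eq_of_bijective (fun i => ⟨(r i * ·) '' H, r i, hr i, rfl⟩) ⟨?_, ?_⟩
  · intro i j hij
    have h := congrArg Subtype.val hij
    simp only at h
    have hj : r j ∈ (r i * ·) '' H := by
      rw [h]; exact ⟨1, h1, by simp⟩
    obtain ⟨m, hm, hmj⟩ := hj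
    apply sep
    rw [← hmj]
    simp only
    rw [← Matrix.mul_assoc, (hU _ (hr i)).left, Matrix.one_mul]
    exact hm
  · rintro ⟨S, γ, hγ, rfl⟩
    obtain ⟨i, hi⟩ := cover γ hγ
    refine ⟨i, Subtype.ext ?_⟩
    have e : γ = r i * (adjJ (r i) * γ) := by
      rw [← Matrix.mul_assoc, (hU _ (hr i)).right, Matrix.one_mul]
    simp only
    set k := adjJ (r i) * γ with hk
    have hku := hU _ (hHG hi)
    ext x
    constructor
    · rintro ⟨m, hm, rfl⟩
      refine ⟨adjJ k * m, hmul _ (hinv _ hi) _ hm, ?_⟩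
      simp only
      rw [e, Matrix.mul_assoc, ← Matrix.mul_assoc k, hku.right, Matrix.one_mul]
    · rintro ⟨m, hm, rfl⟩
      refine ⟨k * m, hmul _ hi _ hm, ?_⟩
      simp only
      rw [← Matrix.mul_assoc, ← e]


/-! ### Closure properties of the groups -/

variable {d : ℕ} {ρ : ℂ → ZMod d}

lemma GoodD.zero_mem (hG : GoodD d ρ) : inOd d 0 := by simpa using hG.int 0

lemma GoodD.one_mem (hG : GoodD d ρ) : inOd d 1 := by simpa using hG.int 1

lemma GoodD.neg_mem (hG : GoodD d ρ) {z : ℂ} (hz : inOd d z) : inOd d (-z) := by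
  have := hG.mul _ _ (hG.int (-1)) hz
  simpa using this

lemma GoodD.rzero (hG : GoodD d ρ) : ρ 0 = 0 := by simpa using hG.rint 0

lemma GoodD.rone (hG : GoodD d ρ) : ρ 1 = 1 := by simpa using hG.rint 1

lemma GoodD.rneg (hG : GoodD d ρ) {z : ℂ} (hz : inOd d z) : ρ (-z) = -ρ z := by
  have := hG.rmul _ _ (hG.int (-1)) hz
  rw [hG.rint] at this
  simpa using this

lemma GoodD.conj_div (hG : GoodD d ρ) {z : ℂ} (hz : inOd d (z / isqd d)) :
    inOd d (starRingEnd ℂ z / isqd d) := by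
  have h := hG.neg_mem (hG.conj _ hz)
  rw [map_div₀, hG.pi_conj, div_neg, neg_neg] at h
  exact h

lemma GoodD.conj_mul (hG : GoodD d ρ) {z : ℂ} (hz : inOd d (isqd d * z)) :
    inOd d (isqd d * starRingEnd ℂ z) := by
  have h := hG.neg_mem (hG.conj _ hz)
  rw [map_mul, hG.pi_conj, neg_mul, neg_neg] at h
  exact h

lemma inU21_one : inU21 1 := ⟨isUnit_one, by simp⟩

lemma GoodD.P_one (hG : GoodD d ρ) : 1 ∈ GammaPd d := by
  refine ⟨inU21_one, fun j k => ?_⟩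
  rw [Matrix.one_apply]
  split_ifs
  · exact hG.one_mem
  · exact hG.zero_mem

lemma GoodD.S_one (hG : GoodD d ρ) : 1 ∈ GammaSd d := by
  have := hG.one_mem
  have := hG.zero_mem
  refine ⟨inU21_one, ?_⟩
  simp [*]

lemma GoodD.P_mul (hG : GoodD d ρ) {M N : Matrix (Fin 3) (Fin 3) ℂ} (hM : M ∈ GammaPd d)
    (hN : N ∈ GammaPd d) : M * N ∈ GammaPd d := by
  refine ⟨hM.1.mul hN.1, fun j k => ?_⟩
  rw [Matrix.mul_apply, Fin.sum_univ_three]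
  exact hG.add _ _ (hG.add _ _ (hG.mul _ _ (hM.2 _ _) (hN.2 _ _))
    (hG.mul _ _ (hM.2 _ _) (hN.2 _ _))) (hG.mul _ _ (hM.2 _ _) (hN.2 _ _))

lemma GoodD.P_adj (hG : GoodD d ρ) {M : Matrix (Fin 3) (Fin 3) ℂ} (hM : M ∈ GammaPd d) :
    adjJ M ∈ GammaPd d := by
  refine ⟨hM.1.adj, fun j k => ?_⟩
  rw [adjJ_eq]
  fin_cases j <;> fin_cases k <;> exact hG.conj _ (hM.2 _ _)

lemma inOd_congr {z w : ℂ} (h : inOd d w) (e : z = w) : inOd d z := e ▸ h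

lemma GoodD.S_mul (hG : GoodD d ρ) {M N : Matrix (Fin 3) (Fin 3) ℂ} (hM : M ∈ GammaSd d)
    (hN : N ∈ GammaSd d) : M * N ∈ GammaSd d := by
  obtain ⟨hu, m00, m01, m11, m12, m22, m02, m10, m20, m21⟩ := hM
  obtain ⟨hv, n00, n01, n11, n12, n22, n02, n10, n20, n21⟩ := hN
  have hp := hG.pi_mem
  have hn := hG.pi_ne
  refine ⟨hu.mul hv, ?_, ?_, ?_, ?_, ?_, ?_, ?_, ?_, ?_⟩ <;>
    rw [Matrix.mul_apply, Fin.sum_univ_three]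
  · refine inOd_congr (w := M 0 0 * N 0 0 + isqd d * (M 0 1 * (N 1 0 / isqd d))
      + (isqd d * M 0 2) * (N 2 0 / isqd d)) ?_ (by field_simp)
    repeat (first | assumption | apply hG.add | apply hG.mul)
  · refine inOd_congr (w := M 0 0 * N 0 1 + M 0 1 * N 1 1
      + (isqd d * M 0 2) * (N 2 1 / isqd d)) ?_ (by field_simp)
    repeat (first | assumption | apply hG.add | apply hG.mul)
  · refine inOd_congr (w := isqd d * ((M 1 0 / isqd d) * N 0 1) + M 1 1 * N 1 1
      + isqd d * (M 1 2 * (N 2 1 / isqd d))) ?_ (by field_simp)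
    repeat (first | assumption | apply hG.add | apply hG.mul)
  · refine inOd_congr (w := (M 1 0 / isqd d) * (isqd d * N 0 2) + M 1 1 * N 1 2
      + M 1 2 * N 2 2) ?_ (by field_simp)
    repeat (first | assumption | apply hG.add | apply hG.mul)
  · refine inOd_congr (w := (M 2 0 / isqd d) * (isqd d * N 0 2)
      + isqd d * ((M 2 1 / isqd d) * N 1 2) + M 2 2 * N 2 2) ?_ (by field_simp)
    repeat (first | assumption | apply hG.add | apply hG.mul)
  · refine inOd_congr (w := M 0 0 * (isqd d * N 0 2) + isqd d * (M 0 1 * N 1 2)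
      + (isqd d * M 0 2) * N 2 2) ?_ (by ring)
    repeat (first | assumption | apply hG.add | apply hG.mul)
  · refine inOd_congr (w := (M 1 0 / isqd d) * N 0 0 + M 1 1 * (N 1 0 / isqd d)
      + M 1 2 * (N 2 0 / isqd d)) ?_ (by field_simp)
    repeat (first | assumption | apply hG.add | apply hG.mul)
  · refine inOd_congr (w := (M 2 0 / isqd d) * N 0 0
      + isqd d * ((M 2 1 / isqd d) * (N 1 0 / isqd d)) + M 2 2 * (N 2 0 / isqd d)) ?_
      (by field_simp)
    repeat (first | assumption | apply hG.add | apply hG.mul)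
  · refine inOd_congr (w := (M 2 0 / isqd d) * N 0 1 + (M 2 1 / isqd d) * N 1 1
      + M 2 2 * (N 2 1 / isqd d)) ?_ (by field_simp)
    repeat (first | assumption | apply hG.add | apply hG.mul)

lemma GoodD.S_adj (hG : GoodD d ρ) {M : Matrix (Fin 3) (Fin 3) ℂ} (hM : M ∈ GammaSd d) :
    adjJ M ∈ GammaSd d := by
  obtain ⟨hu, m00, m01, m11, m12, m22, m02, m10, m20, m21⟩ := hM
  refine ⟨hu.adj, ?_⟩
  rw [adjJ_eq]
  exact ⟨hG.conj _ m22, hG.conj _ m12, hG.conj _ m11, hG.conj _ m01, hG.conj _ m00,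
    hG.conj_mul m02, hG.conj_div m21, hG.conj_div m20, hG.conj_div m10⟩

lemma GoodD.H_one (hG : GoodD d ρ) : 1 ∈ Hd d := ⟨hG.P_one, hG.S_one⟩

lemma GoodD.H_mul (hG : GoodD d ρ) (M) (hM : M ∈ Hd d) (N) (hN : N ∈ Hd d) : M * N ∈ Hd d :=
  ⟨hG.P_mul hM.1 hN.1, hG.S_mul hM.2 hN.2⟩

lemma GoodD.H_adj (hG : GoodD d ρ) (M) (hM : M ∈ Hd d) : adjJ M ∈ Hd d :=
  ⟨hG.P_adj hM.1, hG.S_adj hM.2⟩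

/-! ### The sister group -/

lemma GoodD.H_of_S (hG : GoodD d ρ) {M : Matrix (Fin 3) (Fin 3) ℂ} (hM : M ∈ GammaSd d)
    (h02 : inOd d (M 0 2)) : M ∈ Hd d := by
  refine ⟨⟨hM.1, ?_⟩, hM⟩
  obtain ⟨hu, m00, m01, m11, m12, m22, m02, m10, m20, m21⟩ := hM
  have key : ∀ z, inOd d (z / isqd d) → inOd d z := fun z hz =>
    inOd_congr (hG.mul _ _ hG.pi_mem hz) (by have := hG.pi_ne; field_simp)
  have k10 := key _ m10
  have k20 := key _ m20
  have k21 := key _ m21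
  intro j k
  fin_cases j <;> fin_cases k <;> assumption

/-- Coset representatives in the sister group. -/
def repS (d : ℕ) : Option (ZMod d) → Matrix (Fin 3) (Fin 3) ℂ
  | none => !![0, 0, 1 / isqd d; 0, 1, 0; - isqd d, 0, 0]
  | some t => !![1, 0, (t.val : ℂ) / isqd d; 0, 1, 0; 0, 0, 1]

lemma adj_repS_none (hG : GoodD d ρ) :
    adjJ (repS d none) = !![0, 0, -(1 / isqd d); 0, 1, 0; isqd d, 0, 0] := by
  have := hG.pi_conj
  rw [adjJ_eq]
  ext i j; fin_cases i <;> fin_cases j <;> simp [repS, this]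

lemma adj_repS_some (hG : GoodD d ρ) (t : ZMod d) :
    adjJ (repS d (some t)) = !![1, 0, -((t.val : ℂ) / isqd d); 0, 1, 0; 0, 0, 1] := by
  have := hG.pi_conj
  rw [adjJ_eq]
  ext i j; fin_cases i <;> fin_cases j <;> simp [repS, this, div_neg]

lemma repS_mem (hG : GoodD d ρ) (i) : repS d i ∈ GammaSd d := by
  have hn := hG.pi_ne
  have h1 := hG.one_mem
  have h0 := hG.zero_mem
  have hm1 := hG.neg_mem h1
  cases i with
  | none =>
    refine ⟨inU21_of ?_, ?_⟩
    · rw [adj_repS_none hG]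
      ext i j; fin_cases i <;> fin_cases j <;>
        simp [repS, Matrix.mul_apply, Fin.sum_univ_three, hn]
    · simp [repS, hn, h1, h0, hm1]
  | some t =>
    have ht : inOd d (t.val : ℂ) := by simpa using hG.int t.val
    refine ⟨inU21_of ?_, ?_⟩
    · rw [adj_repS_some hG]
      ext i j; fin_cases i <;> fin_cases j <;>
        simp [repS, Matrix.mul_apply, Fin.sum_univ_three]
    · have : isqd d * ((t.val : ℂ) / isqd d) = t.val := by field_simp
      simp [repS, h1, h0, this, ht]

lemma GoodD.rnat (hG : GoodD d ρ) (t : ZMod d) : ρ (t.val : ℂ) = t := by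
  have := Fact.mk hG.prime
  have := hG.rint (t.val : ℤ)
  simpa using this

lemma card_S (hG : GoodD d ρ) :
    Nat.card {S : Set (Matrix (Fin 3) (Fin 3) ℂ) //
        ∃ γ ∈ GammaSd d, S = (γ * ·) '' Hd d} = d + 1 := by
  have := Fact.mk hG.prime
  have hn := hG.pi_ne
  have hval : ∀ t : ZMod d, inOd d (t.val : ℂ) := fun t => by simpa using hG.int t.val
  have hone : ¬ inOd d (1 / isqd d) := by
    rw [← hG.ker _ hG.one_mem, hG.rone]; exact one_ne_zero
  rw [card_cosets (GammaSd d) (Hd d) (fun M hM => hM.1) (fun M hM => hM.2) hG.H_one hG.H_mul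
    hG.H_adj (repS d) (repS_mem hG)]
  · rw [Nat.card_eq_fintype_card, Fintype.card_option, ZMod.card]
  · intro γ hγ
    obtain ⟨hu, m00, m01, m11, m12, m22, m02, m10, m20, m21⟩ := id hγ
    by_cases h : ρ (γ 2 2) = 0
    · refine ⟨none, hG.H_of_S (hG.S_mul (hG.S_adj (repS_mem hG _)) hγ) ?_⟩
      rw [adj_repS_none hG, Matrix.mul_apply, Fin.sum_univ_three]
      refine inOd_congr (hG.neg_mem ((hG.ker _ m22).1 h)) ?_
      simp; field_simp
    · refine ⟨some (ρ (isqd d * γ 0 2) / ρ (γ 2 2)),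
        hG.H_of_S (hG.S_mul (hG.S_adj (repS_mem hG _)) hγ) ?_⟩
      rw [adj_repS_some hG, Matrix.mul_apply, Fin.sum_univ_three]
      set t := ρ (isqd d * γ 0 2) / ρ (γ 2 2) with ht
      have hz := hG.neg_mem (hG.mul _ _ (hval t) m22)
      refine inOd_congr ((hG.ker (isqd d * γ 0 2 + -((t.val : ℂ) * γ 2 2))
        (hG.add _ _ m02 hz)).1 ?_) ?_
      · rw [hG.radd _ _ m02 hz, hG.rneg (hG.mul _ _ (hval t) m22), hG.rmul _ _ (hval t) m22,
          hG.rnat, ht]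
        field_simp
        ring
      · simp; field_simp
  · intro i j hij
    have h := hij.1.2 0 2
    rw [Matrix.mul_apply, Fin.sum_univ_three] at h
    cases i with
    | none =>
      rw [adj_repS_none hG] at h
      cases j with
      | none => rfl
      | some u =>
        exfalso; apply hone
        refine inOd_congr (hG.neg_mem h) ?_
        simp [repS]
    | some t =>
      rw [adj_repS_some hG] at h
      cases j with
      | none =>
        exfalso; apply hone
        refine inOd_congr h ?_
        simp [repS]
      | some u =>
        have hz := hG.neg_mem (hval t)
        have : inOd d (((u.val : ℂ) + -(t.val : ℂ)) / isqd d) := by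
          refine inOd_congr h ?_
          simp [repS]; ring
        rw [← hG.ker _ (hG.add _ _ (hval u) hz), hG.radd _ _ (hval u) hz, hG.rneg (hval t),
          hG.rnat, hG.rnat] at this
        congr 1
        linear_combination -this

/-! ### The Picard group -/

lemma P_rels {M : Matrix (Fin 3) (Fin 3) ℂ} (h : inU21 M) (j : Fin 3) :
    starRingEnd ℂ (M 2 0) * M 0 j + starRingEnd ℂ (M 1 0) * M 1 j + starRingEnd ℂ (M 0 0) * M 2 j
      = (1 : Matrix (Fin 3) (Fin 3) ℂ) 2 j := by
  rw [← h.left, adjJ_eq, Matrix.mul_apply, Fin.sum_univ_three]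
  simp

lemma GoodD.P_rrels (hG : GoodD d ρ) {M : Matrix (Fin 3) (Fin 3) ℂ} (h : M ∈ GammaPd d)
    (j : Fin 3) :
    ρ (M 2 0) * ρ (M 0 j) + ρ (M 1 0) * ρ (M 1 j) + ρ (M 0 0) * ρ (M 2 j)
      = ρ ((1 : Matrix (Fin 3) (Fin 3) ℂ) 2 j) := by
  have m := h.2
  have c := fun i j => hG.conj _ (h.2 i j)
  rw [← P_rels h.1 j, hG.radd _ _ (hG.add _ _ (hG.mul _ _ (c _ _) (m _ _))
      (hG.mul _ _ (c _ _) (m _ _))) (hG.mul _ _ (c _ _) (m _ _)),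
    hG.radd _ _ (hG.mul _ _ (c _ _) (m _ _)) (hG.mul _ _ (c _ _) (m _ _)),
    hG.rmul _ _ (c _ _) (m _ _), hG.rmul _ _ (c _ _) (m _ _), hG.rmul _ _ (c _ _) (m _ _),
    hG.rconj _ (m _ _), hG.rconj _ (m _ _), hG.rconj _ (m _ _)]

lemma GoodD.H_of_P (hG : GoodD d ρ) {M : Matrix (Fin 3) (Fin 3) ℂ} (hM : M ∈ GammaPd d)
    (h10 : ρ (M 1 0) = 0) (h20 : ρ (M 2 0) = 0) : M ∈ Hd d := by
  have := Fact.mk hG.prime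
  have m := hM.2
  have r1 := hG.P_rrels hM 1
  have r2 := hG.P_rrels hM 2
  rw [Matrix.one_apply_eq, hG.rone, h10, h20] at r2
  rw [Matrix.one_apply_ne (by decide), hG.rzero, h10, h20] at r1
  have h21 : ρ (M 2 1) = 0 := by
    linear_combination ρ (M 2 2) * r1 - ρ (M 2 1) * r2
  exact ⟨hM, hM.1, m _ _, m _ _, m _ _, m _ _, m _ _, hG.mul _ _ hG.pi_mem (m _ _),
    (hG.ker _ (m _ _)).1 h10, (hG.ker _ (m _ _)).1 h20, (hG.ker _ (m _ _)).1 h21⟩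

/-- Parameters of the coset representatives in the Picard group. -/
structure RepP (d : ℕ) (ρ : ℂ → ZMod d) (y z : ZMod d → ℂ) : Prop where
  hy : ∀ t, inOd d (y t)
  hz : ∀ t, inOd d (z t)
  rel : ∀ t, starRingEnd ℂ (z t) + starRingEnd ℂ (y t) * y t + z t = 0
  inj : ∀ t u, ρ (y t) = ρ (y u) → ρ (z t) = ρ (z u) → t = u
  cov : ∀ a b c : ZMod d, a ≠ 0 → c * a + b * b + a * c = 0 →
    ∃ t, b = ρ (y t) * a ∧ c = ρ (z t) * a

/-- Coset representatives in the Picard group. -/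
def repP (y z : ZMod d → ℂ) : Option (ZMod d) → Matrix (Fin 3) (Fin 3) ℂ
  | none => matJ
  | some t => !![1, 0, 0; y t, 1, 0; z t, - starRingEnd ℂ (y t), 1]

lemma adj_repP_none (y z : ZMod d → ℂ) : adjJ (repP y z none) = matJ := by
  simp [adjJ, repP, matJ_H, matJ_sq]

lemma adj_repP_some (y z : ZMod d → ℂ) (t : ZMod d) :
    adjJ (repP y z (some t)) = !![1, 0, 0; -(y t), 1, 0;
      starRingEnd ℂ (z t), starRingEnd ℂ (y t), 1] := by
  rw [adjJ_eq]
  ext i j; fin_cases i <;> fin_cases j <;> simp [repP]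

lemma repP_mem (hG : GoodD d ρ) {y z : ZMod d → ℂ} (hR : RepP d ρ y z) (i) :
    repP y z i ∈ GammaPd d := by
  have h1 := hG.one_mem
  have h0 := hG.zero_mem
  cases i with
  | none =>
    refine ⟨inU21_of ?_, ?_⟩
    · rw [adj_repP_none]; exact matJ_sq
    · intro i j; fin_cases i <;> fin_cases j <;> simp [repP, matJ, h1, h0]
  | some t =>
    have hy := hR.hy t
    have hz := hR.hz t
    have hyc := hG.neg_mem (hG.conj _ hy)
    refine ⟨inU21_of ?_, ?_⟩
    · have := hR.rel t
      rw [adj_repP_some]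
      ext i j; fin_cases i <;> fin_cases j <;>
        simp [repP, Matrix.mul_apply, Fin.sum_univ_three, this]
    · intro i j; fin_cases i <;> fin_cases j <;> simp [repP, *]

lemma card_P (hG : GoodD d ρ) {y z : ZMod d → ℂ} (hR : RepP d ρ y z) :
    Nat.card {S : Set (Matrix (Fin 3) (Fin 3) ℂ) //
        ∃ γ ∈ GammaPd d, S = (γ * ·) '' Hd d} = d + 1 := by
  have := Fact.mk hG.prime
  have h1 := hG.rone
  have hy := hR.hy
  have hz := hR.hz
  have hyc := fun t => hG.conj _ (hy t)
  have hzc := fun t => hG.conj _ (hz t)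
  have hrel : ∀ t, ρ (z t) + ρ (y t) * ρ (y t) + ρ (z t) = 0 := by
    intro t
    have := congrArg ρ (hR.rel t)
    rwa [hG.rzero, hG.radd _ _ (hG.add _ _ (hzc t) (hG.mul _ _ (hyc t) (hy t))) (hz t),
      hG.radd _ _ (hzc t) (hG.mul _ _ (hyc t) (hy t)), hG.rmul _ _ (hyc t) (hy t),
      hG.rconj _ (hz t), hG.rconj _ (hy t)] at this
  -- the action of the representatives on first columns, modulo `i√d`
  have n10 : ∀ γ : Matrix (Fin 3) (Fin 3) ℂ, (adjJ (repP y z none) * γ) 1 0 = γ 1 0 := by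
    intro γ
    simp [adj_repP_none, Matrix.mul_apply, Fin.sum_univ_three, matJ]
  have n20 : ∀ γ : Matrix (Fin 3) (Fin 3) ℂ, (adjJ (repP y z none) * γ) 2 0 = γ 0 0 := by
    intro γ
    simp [adj_repP_none, Matrix.mul_apply, Fin.sum_univ_three, matJ]
  have s10 : ∀ t, ∀ γ ∈ GammaPd d, ρ ((adjJ (repP y z (some t)) * γ) 1 0)
      = ρ (γ 1 0) - ρ (y t) * ρ (γ 0 0) := by
    intro t γ hγ
    have : (adjJ (repP y z (some t)) * γ) 1 0 = γ 1 0 + -(y t * γ 0 0) := by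
      simp [adj_repP_some, Matrix.mul_apply, Fin.sum_univ_three]; ring
    have hm := hG.mul _ _ (hy t) (hγ.2 0 0)
    rw [this, hG.radd _ _ (hγ.2 _ _) (hG.neg_mem hm), hG.rneg hm, hG.rmul _ _ (hy t) (hγ.2 _ _)]
    ring
  have s20 : ∀ t, ∀ γ ∈ GammaPd d, ρ ((adjJ (repP y z (some t)) * γ) 2 0)
      = ρ (z t) * ρ (γ 0 0) + ρ (y t) * ρ (γ 1 0) + ρ (γ 2 0) := by
    intro t γ hγ
    have : (adjJ (repP y z (some t)) * γ) 2 0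
        = starRingEnd ℂ (z t) * γ 0 0 + starRingEnd ℂ (y t) * γ 1 0 + γ 2 0 := by
      simp [adj_repP_some, Matrix.mul_apply, Fin.sum_univ_three]
    have hm := hG.mul _ _ (hzc t) (hγ.2 0 0)
    have hm' := hG.mul _ _ (hyc t) (hγ.2 1 0)
    rw [this, hG.radd _ _ (hG.add _ _ hm hm') (hγ.2 _ _), hG.radd _ _ hm hm',
      hG.rmul _ _ (hzc t) (hγ.2 _ _), hG.rmul _ _ (hyc t) (hγ.2 _ _), hG.rconj _ (hz t),
      hG.rconj _ (hy t)]
  have kerH : ∀ M ∈ Hd d, ρ (M 1 0) = 0 ∧ ρ (M 2 0) = 0 := by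
    rintro M ⟨hP, hu, m00, m01, m11, m12, m22, m02, m10, m20, m21⟩
    exact ⟨(hG.ker _ (hP.2 _ _)).2 m10, (hG.ker _ (hP.2 _ _)).2 m20⟩
  rw [card_cosets (GammaPd d) (Hd d) (fun M hM => hM.1) (fun M hM => hM.1) hG.H_one hG.H_mul
    hG.H_adj (repP y z) (repP_mem hG hR)]
  · rw [Nat.card_eq_fintype_card, Fintype.card_option, ZMod.card]
  · intro γ hγ
    have r0 := hG.P_rrels hγ 0
    rw [Matrix.one_apply_ne (by decide), hG.rzero] at r0
    by_cases h : ρ (γ 0 0) = 0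
    · refine ⟨none, hG.H_of_P (hG.P_mul (hG.P_adj (repP_mem hG hR _)) hγ) ?_ ?_⟩
      · rw [n10]
        rw [h] at r0
        simpa using r0
      · rw [n20, h]
    · obtain ⟨t, h10, h20⟩ := hR.cov _ _ _ h r0
      refine ⟨some t, hG.H_of_P (hG.P_mul (hG.P_adj (repP_mem hG hR _)) hγ) ?_ ?_⟩
      · rw [s10 t γ hγ, h10]; ring
      · rw [s20 t γ hγ, h10, h20]
        linear_combination ρ (γ 0 0) * hrel t
  · intro i j hij
    obtain ⟨k1, k2⟩ := kerH _ hij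
    have hj := repP_mem hG hR j
    cases i with
    | none =>
      cases j with
      | none => rfl
      | some u =>
        rw [n20] at k2
        exfalso
        simp [repP, h1] at k2
    | some t =>
      rw [s10 t _ hj] at k1
      rw [s20 t _ hj] at k2
      cases j with
      | none =>
        exfalso
        simp [repP, matJ, h1, hG.rzero] at k2
      | some u =>
        simp only [repP, Matrix.of_apply, Matrix.cons_val, h1, mul_one] at k1 k2
        have e1 : ρ (y t) = ρ (y u) := by linear_combination -k1
        have e2 : ρ (z t) = ρ (z u) := by
          rw [← e1] at k2
          linear_combination hrel t - k2
        rw [hR.inj t u e1 e2]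

lemma repP_two : RepP 2 (rhoAux 2 0) (fun t => (t.val : ℂ) * isqd 2)
    (fun t => -((t.val : ℂ) * t.val)) := by
  have hG := good_two
  have hval : ∀ t : ZMod 2, inOd 2 (t.val : ℂ) := fun t => by simpa using hG.int t.val
  have hpi : rhoAux 2 0 (isqd 2) = 0 := by
    rw [hG.ker _ hG.pi_mem, div_self hG.pi_ne]; exact hG.one_mem
  have ry : ∀ t : ZMod 2, rhoAux 2 0 ((t.val : ℂ) * isqd 2) = 0 := fun t => by
    rw [hG.rmul _ _ (hval t) hG.pi_mem, hpi, mul_zero]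
  have rz : ∀ t : ZMod 2, rhoAux 2 0 (-((t.val : ℂ) * t.val)) = -(t * t) := fun t => by
    rw [hG.rneg (hG.mul _ _ (hval t) (hval t)), hG.rmul _ _ (hval t) (hval t), hG.rnat]
  refine ⟨fun t => hG.mul _ _ (hval t) hG.pi_mem,
    fun t => hG.neg_mem (hG.mul _ _ (hval t) (hval t)), fun t => ?_, ?_, ?_⟩
  · have := isqd_sq 2
    simp only [map_mul, map_neg, hG.pi_conj, Complex.conj_natCast]
    push_cast at this
    linear_combination (-(t.val : ℂ) * t.val) * this
  · intro t u
    simp only [ry, rz]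
    revert t u; decide
  · simp only [ry, rz]
    decide

lemma repP_three (d : ℕ) (hp : d.Prime) (h4 : d % 4 = 3) :
    RepP d (rhoAux d (((d + 1) / 2 : ℕ) : ZMod d)) (fun t => (t.val : ℂ))
    (fun t => -((t.val : ℂ) * t.val * OdGen d)) := by
  have hG := good_three d hp h4
  have := Fact.mk hp
  set ρ := rhoAux d (((d + 1) / 2 : ℕ) : ZMod d) with hρ
  have hval : ∀ t : ZMod d, inOd d (t.val : ℂ) := fun t => by simpa using hG.int t.val
  have hgen : inOd d (OdGen d) := ⟨0, 1, by simp⟩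
  have hsum : starRingEnd ℂ (OdGen d) + OdGen d = 1 := by
    rw [OdGen_three d h4, map_div₀, map_add, isqd_conj, map_one, Complex.conj_ofNat]; ring
  have rgen : ρ (OdGen d) + ρ (OdGen d) = 1 := by
    have := congrArg ρ hsum
    rwa [hG.rone, hG.radd _ _ (hG.conj _ hgen) hgen, hG.rconj _ hgen] at this
  have hm := fun t => hG.mul _ _ (hG.mul _ _ (hval t) (hval t)) hgen
  have rz : ∀ t : ZMod d, ρ (-((t.val : ℂ) * t.val * OdGen d)) = -(t * t * ρ (OdGen d)) :=
    fun t => by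
      rw [hG.rneg (hm t), hG.rmul _ _ (hG.mul _ _ (hval t) (hval t)) hgen,
        hG.rmul _ _ (hval t) (hval t), hG.rnat]
  refine ⟨hval, fun t => hG.neg_mem (hm t), fun t => ?_, ?_, ?_⟩
  · simp only [map_mul, map_neg, Complex.conj_natCast]
    linear_combination (-(t.val : ℂ) * t.val) * hsum
  · intro t u h _
    simpa only [hG.rnat] using h
  · intro a b c ha h
    refine ⟨b / a, ?_, ?_⟩
    · rw [hG.rnat]; field_simp
    · rw [rz]
      field_simp
      linear_combination ρ (OdGen d) * h - a * c * rgen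

/-- For `d ∈ {2,7,11}`, the subgroup `H^(d)` has the same finite index `d+1`
(which is `3` when `d = 2`) in both `Γ^(d)` and `Γ_s^(d)`: the number of left cosets
`γ·H^(d)` with `γ ∈ Γ^(d)` is `d+1`, and likewise for `γ ∈ Γ_s^(d)`.
In particular `Γ^(d)` and `Γ_s^(d)` are commensurable. -/
theorem Hd_index :
    ∀ d ∈ ({2, 7, 11} : Set ℕ),
      Nat.card {S : Set (Matrix (Fin 3) (Fin 3) ℂ) //
        ∃ γ ∈ GammaPd d, S = (γ * ·) '' Hd d} = d + 1 ∧
      Nat.card {S : Set (Matrix (Fin 3) (Fin 3) ℂ) //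
        ∃ γ ∈ GammaSd d, S = (γ * ·) '' Hd d} = d + 1 := by
  intro d hd
  rcases hd with rfl | rfl | rfl
  · exact ⟨card_P good_two repP_two, card_S good_two⟩
  · exact ⟨card_P (good_three 7 (by norm_num) rfl) (repP_three 7 (by norm_num) rfl),
      card_S (good_three 7 (by norm_num) rfl)⟩
  · exact ⟨card_P (good_three 11 (by norm_num) rfl) (repP_three 11 (by norm_num) rfl),
      card_S (good_three 11 (by norm_num) rfl)⟩
end
end
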